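/- Feasibility of the rounding algorithm (first assertion of Proposition 3): let N_sf be an even positive integer, and let (x̂, ŷ^A, ŷ^{nA}, Â, N̂, R̂) be nonnegative and satisfy the RELAXED-ABS constraints (T), (I), (X), (YA), (Y) together with Â_p ≤ N_sf and N̂_m ≤ N_sf for all p, m. Assume X_m > 0, Y_p^A > 0, Y_p^{nA} > 0 for all m, p in the Algorithm 2 construction. Then the Algorithm 2 output is feasible for OPT-ABS: (i) N_m* and A_p* are integers with 0 ≤ N_m* ≤ N_sf and 0 ≤ A_p* ≤ N_sf; (ii) A_p* + N_m* ≤ N_sf for every p and every m ∈ I_p; (iii) Σ_{u∈𝒰_m} x_u* ≤ N_m* for every m; (iv) Σ_{u∈𝒰_p} y_u^{A*} ≤ A_p* for every p; (v) Σ_{u∈𝒰_p} (y_u^{A*} + y_u^{nA*}) ≤ N_sf for every p; (vi) x_u* · (y_u^{A*} + y_u^{nA*}) = 0 for every u, and all of x*, y^{A*}, y^{nA*} are nonnegative. -/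

import Mathlib

open Finset

/-- The rounding function `Rnd_{N_sf}` : round down if `x ≥ N_sf / 2`, round up otherwise. -/
noncomputable def Rnd (Nsf : ℕ) (x : ℝ) : ℤ :=
  if (Nsf : ℝ) / 2 ≤ x then ⌊x⌋ else ⌈x⌉

/-!
Rescaling the airtimes of the UEs that stay with a cell makes them sum to exactly the rounded budget
of that cell, so the airtime constraints become equalities. For the interference constraint, if one
of the two budgets is at least `N_sf / 2`, it is rounded down, and the rounding of the other one up
cannot overshoot, `N_sf` being an integer. If both are below `N_sf / 2`, each is rounded to at most
`N_sf / 2`, which is an integer because `N_sf` is even.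
-/

section Rounding

theorem floor_add_ceil_le_of_add_le {R : Type*} [Ring R] [LinearOrder R] [IsStrictOrderedRing R]
    [FloorRing R] {x y : R} {n : ℤ} (h : x + y ≤ n) : ⌊x⌋ + ⌈y⌉ ≤ n := by
  rw [← le_sub_iff_add_le', Int.ceil_le, Int.cast_sub]
  calc y ≤ n - x := le_sub_iff_add_le'.2 h
    _ ≤ n - ⌊x⌋ := sub_le_sub_left (Int.floor_le x) _

variable {Nsf : ℕ} {x y : ℝ}

theorem floor_le_rnd (Nsf : ℕ) (x : ℝ) : ⌊x⌋ ≤ Rnd Nsf x := by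
  unfold Rnd
  split_ifs
  exacts [le_rfl, Int.floor_le_ceil x]

theorem rnd_le_ceil (Nsf : ℕ) (x : ℝ) : Rnd Nsf x ≤ ⌈x⌉ := by
  unfold Rnd
  split_ifs
  exacts [Int.floor_le_ceil x, le_rfl]

theorem rnd_nonneg (hx : 0 ≤ x) : 0 ≤ Rnd Nsf x :=
  (Int.floor_nonneg.2 hx).trans (floor_le_rnd Nsf x)

theorem rnd_le_of_le {n : ℤ} (hx : x ≤ n) : Rnd Nsf x ≤ n :=
  (rnd_le_ceil Nsf x).trans (Int.ceil_le.2 hx)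

theorem rnd_add_rnd_le_of_half_le (hx : (Nsf : ℝ) / 2 ≤ x) (h : x + y ≤ Nsf) :
    Rnd Nsf x + Rnd Nsf y ≤ Nsf :=
  calc Rnd Nsf x + Rnd Nsf y = ⌊x⌋ + Rnd Nsf y := by rw [Rnd, if_pos hx]
    _ ≤ ⌊x⌋ + ⌈y⌉ := by gcongr; exact rnd_le_ceil Nsf y
    _ ≤ Nsf := floor_add_ceil_le_of_add_le (mod_cast h)

theorem rnd_add_rnd_le (hEven : Even Nsf) (h : x + y ≤ Nsf) : Rnd Nsf x + Rnd Nsf y ≤ Nsf := by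
  rcases le_or_gt ((Nsf : ℝ) / 2) x with hx | hx
  · exact rnd_add_rnd_le_of_half_le hx h
  rcases le_or_gt ((Nsf : ℝ) / 2) y with hy | hy
  · rw [add_comm] at h ⊢
    exact rnd_add_rnd_le_of_half_le hy h
  obtain ⟨k, rfl⟩ := hEven
  have rnd_le_half {z : ℝ} (hz : z < ((k + k : ℕ) : ℝ) / 2) : Rnd (k + k) z ≤ k := by
    refine rnd_le_of_le ?_
    push_cast at hz ⊢
    linarith
  exact_mod_cast add_le_add (rnd_le_half hx) (rnd_le_half hy)

end Rounding

section Rescaling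

variable {ι κ K : Type*} [Fintype ι] [DecidableEq κ]

/-- The weights `w`, restricted to the indices satisfying `q` and rescaled on each fiber of `f` so
that their total over the fiber above `k` becomes `c k`. With `f` the candidate cell of a UE, `q`
the UEs associated with that type of cell and `c` the rounded budget, this is the airtime assigned
by Algorithm 2. If the restricted weights sum to `0` on a fiber, all values there are `0`. -/
def rescaleOnFibers [Field K] (f : ι → κ) (q : ι → Prop) [DecidablePred q] (w : ι → K)
    (c : κ → K) (i : ι) : K :=
  if q i then w i * c (f i) / ∑ j with f j = f i ∧ q j, w j else 0

theorem sum_rescaleOnFibers [Field K] {f : ι → κ} {q : ι → Prop} [DecidablePred q] {w : ι → K}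
    (c : κ → K) {k : κ} (hk : ∑ i with f i = k ∧ q i, w i ≠ 0) :
    ∑ i with f i = k, rescaleOnFibers f q w c i = c k :=
  calc ∑ i with f i = k, rescaleOnFibers f q w c i
    _ = ∑ i with f i = k, if q i then w i * c k / ∑ j with f j = k ∧ q j, w j else 0 :=
      sum_congr rfl fun i hi => by rw [rescaleOnFibers, (mem_filter.1 hi).2]
    _ = (∑ i with f i = k ∧ q i, w i) * c k / ∑ j with f j = k ∧ q j, w j := by
      rw [← sum_filter, filter_filter, ← sum_div, ← sum_mul]
    _ = c k := mul_div_cancel_left₀ (c k) hk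

theorem rescaleOnFibers_nonneg [Field K] [LinearOrder K] [IsStrictOrderedRing K] {f : ι → κ}
    {q : ι → Prop} [DecidablePred q] {w : ι → K} {c : κ → K} (hw : ∀ i, 0 ≤ w i)
    (hc : ∀ k, 0 ≤ c k) (i : ι) : 0 ≤ rescaleOnFibers f q w c i := by
  unfold rescaleOnFibers
  split_ifs
  exacts [div_nonneg (mul_nonneg (hw i) (hc _)) (sum_nonneg fun j _ => hw j), le_rfl]

theorem rescaleOnFibers_of_not [Field K] {f : ι → κ} {q : ι → Prop} [DecidablePred q] {w : ι → K}
    {c : κ → K} {i : ι} (hi : ¬ q i) : rescaleOnFibers f q w c i = 0 :=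
  if_neg hi

end Rescaling

/-- Feasibility for OPT-ABS of integer subframe counts `N` (macros) and `A` (picos) with airtimes
`x`, `yA`, `ynA`: the conditions (i)–(vi), in this order. The throughput constraint is left out. -/
def IsOptABSFeasible {U M P : Type*} [Fintype U] [DecidableEq M] [DecidableEq P]
    (mu : U → M) (pu : U → P) (Ip : P → Finset M) (Nsf : ℕ) (N : M → ℤ) (A : P → ℤ)
    (x yA ynA : U → ℝ) : Prop :=
  (∀ m, 0 ≤ N m ∧ N m ≤ Nsf) ∧
  (∀ p, 0 ≤ A p ∧ A p ≤ Nsf) ∧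
  (∀ p, ∀ m ∈ Ip p, A p + N m ≤ Nsf) ∧
  (∀ m, ∑ u with mu u = m, x u ≤ N m) ∧
  (∀ p, ∑ u with pu u = p, yA u ≤ A p) ∧
  (∀ p, ∑ u with pu u = p, (yA u + ynA u) ≤ Nsf) ∧
  (∀ u, x u * (yA u + ynA u) = 0) ∧
  (∀ u, 0 ≤ x u ∧ 0 ≤ yA u ∧ 0 ≤ ynA u)

theorem stmt_11_general {U M P : Type*} [Fintype U] [DecidableEq M] [DecidableEq P]
    {mu : U → M} {pu : U → P} {Ip : P → Finset M} {Nsf : ℕ} (hEven : Even Nsf)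
    {xh yAh ynAh : U → ℝ} {Ah : P → ℝ} {Nh : M → ℝ}
    (hx : ∀ u, 0 ≤ xh u) (hyA : ∀ u, 0 ≤ yAh u) (hynA : ∀ u, 0 ≤ ynAh u)
    (hA : ∀ p, 0 ≤ Ah p) (hN : ∀ m, 0 ≤ Nh m) (hI : ∀ p, ∀ m ∈ Ip p, Ah p + Nh m ≤ Nsf)
    (hAub : ∀ p, Ah p ≤ Nsf) (hNub : ∀ m, Nh m ≤ Nsf)
    (macroAssoc : U → Prop) [DecidablePred macroAssoc]
    (hXpos : ∀ m, 0 < ∑ u with mu u = m ∧ macroAssoc u, xh u)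
    (hYApos : ∀ p, 0 < ∑ u with pu u = p ∧ ¬ macroAssoc u, yAh u)
    (hYnApos : ∀ p, 0 < ∑ u with pu u = p ∧ ¬ macroAssoc u, ynAh u) :
    IsOptABSFeasible mu pu Ip Nsf (fun m => Rnd Nsf (Nh m)) (fun p => Rnd Nsf (Ah p))
      (rescaleOnFibers mu macroAssoc xh fun m => Rnd Nsf (Nh m))
      (rescaleOnFibers pu (¬ macroAssoc ·) yAh fun p => Rnd Nsf (Ah p))
      (rescaleOnFibers pu (¬ macroAssoc ·) ynAh fun p => Nsf - Rnd Nsf (Ah p)) := by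
  have hNstar_nonneg m : 0 ≤ Rnd Nsf (Nh m) := rnd_nonneg (hN m)
  have hAstar_nonneg p : 0 ≤ Rnd Nsf (Ah p) := rnd_nonneg (hA p)
  have hAstar_le p : Rnd Nsf (Ah p) ≤ Nsf := rnd_le_of_le (mod_cast hAub p)
  refine ⟨fun m => ⟨hNstar_nonneg m, rnd_le_of_le (mod_cast hNub m)⟩,
    fun p => ⟨hAstar_nonneg p, hAstar_le p⟩, fun p m hm => rnd_add_rnd_le hEven (hI p m hm),
    fun m => (sum_rescaleOnFibers _ (hXpos m).ne').le,
    fun p => (sum_rescaleOnFibers _ (hYApos p).ne').le, fun p => ?total, fun u => ?exclusive,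
    fun u => ⟨rescaleOnFibers_nonneg hx (fun m => mod_cast hNstar_nonneg m) u,
      rescaleOnFibers_nonneg hyA (fun p => mod_cast hAstar_nonneg p) u,
      rescaleOnFibers_nonneg hynA (fun p => sub_nonneg.2 (mod_cast hAstar_le p)) u⟩⟩
  case total =>
    rw [sum_add_distrib, sum_rescaleOnFibers _ (hYApos p).ne',
      sum_rescaleOnFibers _ (hYnApos p).ne', add_sub_cancel]
  case exclusive =>
    by_cases hu : macroAssoc u
    · simp [rescaleOnFibers_of_not, hu]
    · rw [rescaleOnFibers_of_not hu, zero_mul]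

/-- Feasibility of the rounding algorithm (first assertion of Proposition 3): given an
even positive `N_sf` and a nonnegative solution `(x̂, ŷᴬ, ŷⁿᴬ, Â, N̂, R̂)` of the
RELAXED-ABS constraints with `Â_p ≤ N_sf`, `N̂_m ≤ N_sf`, the output of Algorithm 2
(UE association by throughput comparison, rounding of `Â`, `N̂`, and rescaling of the
airtimes) is feasible for OPT-ABS. -/
theorem stmt_11 {U M P : Type*} [Fintype U] [Fintype M] [Fintype P]
    [DecidableEq M] [DecidableEq P]
    (mu : U → M) (pu : U → P) (rMac rPicoABS rPico : U → ℝ)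
    (hrMac : ∀ u, 0 < rMac u) (hrPicoABS : ∀ u, 0 < rPicoABS u)
    (hrPico : ∀ u, 0 < rPico u)
    (Ip : P → Finset M) (Nsf : ℕ) (hNsf : 0 < Nsf) (hEven : Even Nsf)
    (xh yAh ynAh Rh : U → ℝ) (Ah : P → ℝ) (Nh : M → ℝ)
    (hx : ∀ u, 0 ≤ xh u) (hyA : ∀ u, 0 ≤ yAh u) (hynA : ∀ u, 0 ≤ ynAh u)
    (hR : ∀ u, 0 ≤ Rh u) (hA : ∀ p, 0 ≤ Ah p) (hN : ∀ m, 0 ≤ Nh m)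
    (hT : ∀ u, Rh u ≤ rMac u * xh u + rPicoABS u * yAh u + rPico u * ynAh u)
    (hI : ∀ p, ∀ m ∈ Ip p, Ah p + Nh m ≤ (Nsf : ℝ))
    (hX : ∀ m, ∑ u ∈ univ.filter (fun u => mu u = m), xh u ≤ Nh m)
    (hYA : ∀ p, ∑ u ∈ univ.filter (fun u => pu u = p), yAh u ≤ Ah p)
    (hY : ∀ p, ∑ u ∈ univ.filter (fun u => pu u = p), (yAh u + ynAh u) ≤ (Nsf : ℝ))
    (hAub : ∀ p, Ah p ≤ (Nsf : ℝ)) (hNub : ∀ m, Nh m ≤ (Nsf : ℝ))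
    -- Algorithm 2 construction
    (macroAssoc : U → Prop) [DecidablePred macroAssoc]
    (hAssoc : ∀ u, macroAssoc u ↔
      rPicoABS u * yAh u + rPico u * ynAh u < rMac u * xh u)
    (Nstar : M → ℤ) (hNstar : ∀ m, Nstar m = Rnd Nsf (Nh m))
    (Astar : P → ℤ) (hAstar : ∀ p, Astar p = Rnd Nsf (Ah p))
    (Xm : M → ℝ)
    (hXm : ∀ m, Xm m = ∑ u ∈ univ.filter (fun u => mu u = m ∧ macroAssoc u), xh u)
    (YA : P → ℝ)
    (hYAdef : ∀ p, YA p = ∑ u ∈ univ.filter (fun u => pu u = p ∧ ¬ macroAssoc u), yAh u)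
    (YnA : P → ℝ)
    (hYnAdef : ∀ p, YnA p = ∑ u ∈ univ.filter (fun u => pu u = p ∧ ¬ macroAssoc u), ynAh u)
    (hXmpos : ∀ m, 0 < Xm m) (hYApos : ∀ p, 0 < YA p) (hYnApos : ∀ p, 0 < YnA p)
    (xstar yAstar ynAstar : U → ℝ)
    (hxstar : ∀ u, xstar u =
      if macroAssoc u then xh u * (Nstar (mu u) : ℝ) / Xm (mu u) else 0)
    (hyAstar : ∀ u, yAstar u =
      if macroAssoc u then 0 else yAh u * (Astar (pu u) : ℝ) / YA (pu u))
    (hynAstar : ∀ u, ynAstar u =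
      if macroAssoc u then 0
      else ynAh u * ((Nsf : ℝ) - (Astar (pu u) : ℝ)) / YnA (pu u)) :
    -- (i) integrality bounds
    (∀ m, 0 ≤ Nstar m ∧ Nstar m ≤ (Nsf : ℤ)) ∧
    (∀ p, 0 ≤ Astar p ∧ Astar p ≤ (Nsf : ℤ)) ∧
    -- (ii) interference constraints
    (∀ p, ∀ m ∈ Ip p, Astar p + Nstar m ≤ (Nsf : ℤ)) ∧
    -- (iii) macro airtime constraints
    (∀ m, ∑ u ∈ univ.filter (fun u => mu u = m), xstar u ≤ (Nstar m : ℝ)) ∧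
    -- (iv) pico ABS airtime constraints
    (∀ p, ∑ u ∈ univ.filter (fun u => pu u = p), yAstar u ≤ (Astar p : ℝ)) ∧
    -- (v) pico total airtime constraints
    (∀ p, ∑ u ∈ univ.filter (fun u => pu u = p), (yAstar u + ynAstar u) ≤ (Nsf : ℝ)) ∧
    -- (vi) association constraint and nonnegativity
    (∀ u, xstar u * (yAstar u + ynAstar u) = 0) ∧
    (∀ u, 0 ≤ xstar u ∧ 0 ≤ yAstar u ∧ 0 ≤ ynAstar u) := by
  simpa only [IsOptABSFeasible, rescaleOnFibers, ite_not, hxstar, hyAstar, hynAstar, hNstar, hAstar,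
    hXm, hYAdef, hYnAdef] using
    stmt_11_general hEven hx hyA hynA hA hN hI hAub hNub macroAssoc (fun m => hXm m ▸ hXmpos m)
      (fun p => hYAdef p ▸ hYApos p) (fun p => hYnAdef p ▸ hYnApos p)
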